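/- Let (R, 𝔪) be a Noetherian local ring of positive dimension d with a system of parameters x₁, …, x_d. If the top local cohomology module H^d_𝔪(R) admits a commutative R-algebra structure, then H^d_𝔪(R) ⊗_R H^d_𝔪(R) surjects onto H^d_𝔪(R); but H^d_𝔪(H^d_𝔪(R)) = 0, hence H^d_𝔪(R) ⊗_R H^d_𝔪(R) = 0 leads to a contradiction with Grothendieck's non-vanishing theorem. Therefore H^d_𝔪(R) carries no commutative R-algebra structure when d > 0. -/

import Mathlib

open IsLocalRing

/-!
Write `H^n` for local cohomology at `𝔪`. A unit `one` of a bilinear multiplication on `H^d(R)` is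
killed by some power `𝔪 ^ t`, because `H^d(R)` is `𝔪`-power torsion; bilinearity then makes `𝔪 ^ t`
kill `mul one x = x` for every `x`. It therefore suffices to show that no power of `𝔪` kills
`H^d(R)`, a strengthening of Grothendieck's non-vanishing theorem, proved in `lc_top`: for `M`
finitely generated of dimension `n ≥ 1`, no power of `𝔪` kills `H^n(M)`.

The proof is by induction on `n`. Higher local cohomology of `𝔪`-power torsion modules vanishes
(`lc_tors_eq_zero`, through Artin–Rees), so `M` may be replaced by its quotient by the `𝔪`-torsion,
and `𝔪` then contains `M`-regular elements `r`. Suppose that `𝔪 ^ k` kills `H^n(M)`.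

* If `n = 1`, then `M / r ^ (k + 1) M` is torsion and embeds in `H^1(M)`, so that
  `r ^ k M ⊆ r ^ (k + 1) M`, whence `M = r M`, contradicting Nakayama's lemma.
* If `n ≥ 2`, the module `H^(n-1)(M)` is Artinian (`lc_artinian`, by Melkersson's criterion
  `isArtinian_of_ker`), and for `r` outside finitely many primes different from `𝔪` its quotient by
  `r` is killed by a power of `𝔪` (`exists_primes`). The exact sequence
  `H^(n-1)(M) → H^(n-1)(M) → H^(n-1)(M / r M) → H^n(M)`, whose first map is multiplication by `r`,
  shows that a power of `𝔪` kills `H^(n-1)(M / r M)`, against the induction hypothesis in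
  dimension `n - 1`.

Mathlib defines local cohomology as a colimit of the functors `Ext^n(R / 𝔪 ^ t, -)`, with `Ext`
a left derived functor of `Hom(-, M)` into the opposite category. The long exact sequence in the
second variable comes from the short exact sequence of complexes `Hom(P, S)`, with `P` a projective
resolution of `R / 𝔪 ^ t`, and passes to the colimit.
-/

namespace TopLC

open CategoryTheory Limits Opposite

variable {R : Type} [CommRing R]

/-! ### `Ext` in the second variable -/

/-- The contravariant functor `Hom(-, M)`, as a covariant functor to the opposite category: its left
derived functors are by definition the opposites of the functors `Ext^n(-, M)`. -/
noncomputable abbrev yo (M : ModuleCat.{0} R) : ModuleCat.{0} R ⥤ (ModuleCat.{0} R)ᵒᵖ :=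
  ((linearYoneda R (ModuleCat.{0} R)).obj M).rightOp

/-- The transformation `Hom(-, M) ⟶ Hom(-, N)` induced by `f : M ⟶ N`. -/
noncomputable abbrev yoMap {M N : ModuleCat.{0} R} (f : M ⟶ N) : yo N ⟶ yo M :=
  NatTrans.rightOp ((linearYoneda R (ModuleCat.{0} R)).map f)

/-- The complex `Hom(P, M)`, as a chain complex in the opposite category. -/
noncomputable abbrev DC (P : ChainComplex (ModuleCat.{0} R) ℕ) (M : ModuleCat.{0} R) :
    ChainComplex (ModuleCat.{0} R)ᵒᵖ ℕ := ((yo M).mapHomologicalComplex _).obj P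

/-- Functoriality of `Hom(P, M)` in `M`. -/
noncomputable abbrev dcMap (P : ChainComplex (ModuleCat.{0} R) ℕ) {M N : ModuleCat.{0} R} (f : M ⟶ N) :
    DC P N ⟶ DC P M := (NatTrans.mapHomologicalComplex (yoMap f) _).app P

/-- Functoriality of `Hom(P, M)` in `P`. -/
noncomputable abbrev dcMapX {P Q : ChainComplex (ModuleCat.{0} R) ℕ} (φ : P ⟶ Q) (M : ModuleCat.{0} R) :
    DC P M ⟶ DC Q M := ((yo M).mapHomologicalComplex _).map φ

/-- A chosen projective resolution of `X`. -/
noncomputable abbrev PR (X : ModuleCat.{0} R) := projectiveResolution X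

/-- `Ext^n(X, M)` computed by the projective resolution `PR X`. -/
noncomputable def eX (X M : ModuleCat.{0} R) (n : ℕ) :
    op (((Ext R (ModuleCat.{0} R) n).obj (op X)).obj M) ≅ (DC (PR X).complex M).homology n :=
  (PR X).isoLeftDerivedObj (yo M) n

lemma eX_nat (X : ModuleCat.{0} R) {M N : ModuleCat.{0} R} (f : M ⟶ N) (n : ℕ) :
    (((Ext R (ModuleCat.{0} R) n).obj (op X)).map f).op ≫ (eX X M n).hom =
      (eX X N n).hom ≫ HomologicalComplex.homologyMap (dcMap (PR X).complex f) n := by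
  have := (PR X).leftDerived_app_eq (yoMap f) n
  rw [← Category.assoc] at this
  exact (Iso.eq_comp_inv _).1 this

lemma eX_natX {X Y : ModuleCat.{0} R} (g : X ⟶ Y) (φ : (PR X).complex ⟶ (PR Y).complex)
    (h : φ.f 0 ≫ (PR Y).π.f 0 = (PR X).π.f 0 ≫ g)  (M : ModuleCat.{0} R) (n : ℕ) :
    (((Ext R (ModuleCat.{0} R) n).map g.op).app M).op ≫ (eX Y M n).hom =
      (eX X M n).hom ≫ HomologicalComplex.homologyMap (dcMapX φ M) n :=
  ProjectiveResolution.isoLeftDerivedObj_hom_naturality g (PR X) (PR Y) φ h (yo M) n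

lemma comp_f_g (S : ShortComplex (ModuleCat.{0} R)) {A : ModuleCat.{0} R} (x : A ⟶ S.X₁) :
    (x ≫ S.f) ≫ S.g = 0 := by simp

/-- For a short complex `S` and a complex `P`, the short complex
`Hom(P, S.X₁) ⟶ Hom(P, S.X₂) ⟶ Hom(P, S.X₃)`, read in the opposite category. -/
noncomputable abbrev scDC (P : ChainComplex (ModuleCat.{0} R) ℕ) (S : ShortComplex (ModuleCat.{0} R)) :
    ShortComplex (ChainComplex (ModuleCat.{0} R)ᵒᵖ ℕ) :=
  ShortComplex.mk (dcMap P S.g) (dcMap P S.f) (by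
    ext i : 1
    apply Quiver.Hom.unop_inj
    ext x
    exact comp_f_g S x)

lemma scDC_shortExact (P : ChainComplex (ModuleCat.{0} R) ℕ) [∀ i, Projective (P.X i)]
    (S : ShortComplex (ModuleCat.{0} R)) (hS : S.ShortExact) : (scDC P S).ShortExact := by
  apply HomologicalComplex.shortExact_of_degreewise_shortExact
  intro i
  have := hS.mono_f
  have := hS.epi_g
  let T : ShortComplex (ModuleCat.{0} R) := ShortComplex.mk
    (((linearYoneda R (ModuleCat.{0} R)).map S.f).app (op (P.X i)))
    (((linearYoneda R (ModuleCat.{0} R)).map S.g).app (op (P.X i))) (by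
      ext x
      exact comp_f_g S x)
  have hT : T.ShortExact :=
    { exact := by
        rw [ShortComplex.moduleCat_exact_iff]
        intro (x : P.X i ⟶ S.X₂) (hx : x ≫ S.g = 0)
        exact ⟨hS.exact.lift x hx, hS.exact.lift_f x hx⟩
      mono_f := by
        rw [ModuleCat.mono_iff_injective]
        intro (x : P.X i ⟶ S.X₁) (y : P.X i ⟶ S.X₁) (h : x ≫ S.f = y ≫ S.f)
        exact (cancel_mono S.f).1 h
      epi_g := by
        rw [ModuleCat.epi_iff_surjective]
        intro (x : P.X i ⟶ S.X₃)
        exact ⟨Projective.factorThru x S.g, Projective.factorThru_comp x S.g⟩ }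
  exact hT.op


/-- `Ext^n(X, M)`. -/
noncomputable abbrev E (n : ℕ) (X M : ModuleCat.{0} R) : ModuleCat.{0} R :=
  ((Ext R (ModuleCat.{0} R) n).obj (op X)).obj M

instance (X : ModuleCat.{0} R) (i : ℕ) : Projective ((PR X).complex.X i) := (PR X).projective i

/-- The connecting homomorphism `Ext^n(X, S.X₃) ⟶ Ext^(n+1)(X, S.X₁)`. -/
noncomputable def dl (X : ModuleCat.{0} R) {S : ShortComplex (ModuleCat.{0} R)} (hS : S.ShortExact)
    (n : ℕ) : E n X S.X₃ ⟶ E (n + 1) X S.X₁ :=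
  ((eX X S.X₁ (n + 1)).hom ≫ (scDC_shortExact (PR X).complex S hS).δ (n + 1) n (by simp) ≫
    (eX X S.X₃ n).inv).unop

lemma dl_op (X : ModuleCat.{0} R) {S : ShortComplex (ModuleCat.{0} R)} (hS : S.ShortExact)
    (n : ℕ) : (dl X hS n).op ≫ (eX X S.X₃ n).hom =
     (eX X S.X₁ (n + 1)).hom ≫ (scDC_shortExact (PR X).complex S hS).δ (n + 1) n (by simp) := by
  rw [dl, Quiver.Hom.op_unop, Category.assoc, Category.assoc, Iso.inv_hom_id, Category.comp_id]

lemma dl_nat {X Y : ModuleCat.{0} R} (g : X ⟶ Y) {S : ShortComplex (ModuleCat.{0} R)}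
    (hS : S.ShortExact) (n : ℕ) :
    dl Y hS n ≫ ((Ext R (ModuleCat.{0} R) (n + 1)).map g.op).app S.X₁ =
    ((Ext R (ModuleCat.{0} R) n).map g.op).app S.X₃ ≫ dl X hS n := by
  apply Quiver.Hom.op_inj
  rw [← cancel_mono (eX Y S.X₃ n).hom]
  let φ := ProjectiveResolution.lift g (PR X) (PR Y)
  have hφ : φ.f 0 ≫ (PR Y).π.f 0 = (PR X).π.f 0 ≫ g :=
    ProjectiveResolution.lift_commutes_zero g (PR X) (PR Y)
  rw [op_comp, op_comp, Category.assoc, Category.assoc, dl_op, eX_natX g φ hφ,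
    ← Category.assoc, eX_natX g φ hφ, ← Category.assoc, dl_op, Category.assoc, Category.assoc]
  congr 1
  let Φ : scDC (PR X).complex S ⟶ scDC (PR Y).complex S :=
    { τ₁ := dcMapX φ _
      τ₂ := dcMapX φ _
      τ₃ := dcMapX φ _
      comm₁₂ := (NatTrans.mapHomologicalComplex (yoMap S.g) _).naturality φ
      comm₂₃ := (NatTrans.mapHomologicalComplex (yoMap S.f) _).naturality φ }
  exact (HomologicalComplex.HomologySequence.δ_naturality Φ (scDC_shortExact (PR X).complex S hS)
    (scDC_shortExact (PR Y).complex S hS) (n + 1) n (by simp)).symm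

/-- Exactness in the category of modules from exactness of an isomorphic sequence in the
opposite category. -/
lemma exact_of_op {A B C : ModuleCat.{0} R} (f : A ⟶ B) (g : B ⟶ C) {A' B' C' : (ModuleCat.{0} R)ᵒᵖ}
    (g' : C' ⟶ B') (f' : B' ⟶ A') (w : g' ≫ f' = 0) (h : (ShortComplex.mk g' f' w).Exact)
    (a : op A ≅ A') (b : op B ≅ B') (c : op C ≅ C') (hf : f.op ≫ a.hom = b.hom ≫ f')
    (hg : g.op ≫ b.hom = c.hom ≫ g') : Function.Exact f g := by
  have w2 : f ≫ g = 0 := by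
    apply Quiver.Hom.op_inj
    rw [← cancel_mono a.hom, op_comp, Category.assoc, hf, ← Category.assoc, hg, Category.assoc, w]
    simp
  have : (ShortComplex.mk f g w2).op.Exact := by
    refine (ShortComplex.exact_iff_of_iso ?_).2 h
    exact ShortComplex.isoMk c b a hg.symm hf.symm
  have := this.unop
  exact (ShortComplex.ShortExact.moduleCat_exact_iff_function_exact _).1 this

lemma E_exact₂ (X : ModuleCat.{0} R) {S : ShortComplex (ModuleCat.{0} R)} (hS : S.ShortExact)
    (n : ℕ) : Function.Exact (((Ext R (ModuleCat.{0} R) n).obj (op X)).map S.f)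
      (((Ext R (ModuleCat.{0} R) n).obj (op X)).map S.g) :=
  exact_of_op _ _ _ _ _ ((scDC_shortExact (PR X).complex S hS).homology_exact₂ n)
    _ _ _ (eX_nat _ _ _) (eX_nat _ _ _)

lemma E_exact₃ (X : ModuleCat.{0} R) {S : ShortComplex (ModuleCat.{0} R)} (hS : S.ShortExact)
    (n : ℕ) : Function.Exact (((Ext R (ModuleCat.{0} R) n).obj (op X)).map S.g) (dl X hS n) :=
  exact_of_op _ _ _ _ _ ((scDC_shortExact (PR X).complex S hS).homology_exact₁ (n + 1) n (by simp))
    _ _ _ (eX_nat _ _ _) (dl_op _ _ _)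

lemma E_exact₁ (X : ModuleCat.{0} R) {S : ShortComplex (ModuleCat.{0} R)} (hS : S.ShortExact)
    (n : ℕ) : Function.Exact (dl X hS n) (((Ext R (ModuleCat.{0} R) (n + 1)).obj (op X)).map S.f) :=
  exact_of_op _ _ _ _ _ ((scDC_shortExact (PR X).complex S hS).homology_exact₃ (n + 1) n (by simp))
    _ _ _ (dl_op _ _ _) (eX_nat _ _ _)

lemma smul_id_comm {A B : ModuleCat.{0} R} (f : A ⟶ B) (r : R) :
    (r • 𝟙 A) ≫ f = f ≫ (r • 𝟙 B) := by simp

/-- An endomorphism of a complex that is multiplication by `r` in each degree acts as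
multiplication by `r` on homology. -/
lemma homologyMap_scalar (K : ChainComplex (ModuleCat.{0} R)ᵒᵖ ℕ) (r : R) (φ : K ⟶ K)
    (h : ∀ i, φ.f i = (r • 𝟙 (K.X i).unop).op) (n : ℕ) :
    HomologicalComplex.homologyMap φ n = (r • 𝟙 (K.homology n).unop).op := by
  have key : ∀ {A B : (ModuleCat.{0} R)ᵒᵖ} (f : A ⟶ B), f ≫ (r • 𝟙 B.unop).op =
      (r • 𝟙 A.unop).op ≫ f := by
    intro A B f
    apply Quiver.Hom.unop_inj
    simp
  rw [← cancel_mono (K.homologyι n), HomologicalComplex.homologyι_naturality, ← key]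
  congr 1
  rw [← cancel_epi (K.pOpcycles n), HomologicalComplex.p_opcyclesMap, h, key]

lemma E_scalar (X M : ModuleCat.{0} R) (n : ℕ) (r : R) :
    ((Ext R (ModuleCat.{0} R) n).obj (op X)).map (r • 𝟙 M) = r • 𝟙 _ := by
  apply Quiver.Hom.op_inj
  rw [← cancel_mono (eX X M n).hom, eX_nat, homologyMap_scalar _ r]
  · apply Quiver.Hom.unop_inj
    simp
  · intro i
    apply Quiver.Hom.unop_inj
    ext (x : (PR X).complex.X i ⟶ M)
    change x ≫ (r • 𝟙 M) = r • x
    simp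

lemma E_scalarX (X M : ModuleCat.{0} R) (n : ℕ) (r : R) :
    ((Ext R (ModuleCat.{0} R) n).map (r • 𝟙 X).op).app M = r • 𝟙 _ := by
  apply Quiver.Hom.op_inj
  rw [← cancel_mono (eX X M n).hom, eX_natX (r • 𝟙 X) (r • 𝟙 _) (by
    exact smul_id_comm ((PR X).π.f 0 : (PR X).complex.X 0 ⟶ X) r),
    homologyMap_scalar _ r]
  · apply Quiver.Hom.unop_inj
    simp
  · intro i
    apply Quiver.Hom.unop_inj
    ext (x : (PR X).complex.X i ⟶ M)
    change (r • 𝟙 _) ≫ x = r • x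
    simp

lemma E_inj (X M : ModuleCat.{0} R) [Injective M] (n : ℕ) : IsZero (E (n + 1) X M) := by
  apply IsZero.unop (X := op (E (n + 1) X M))
  refine IsZero.of_iso ?_ (eX X M (n + 1))
  rw [← HomologicalComplex.exactAt_iff_isZero_homology]
  rw [HomologicalComplex.exactAt_iff' _ (n + 2) (n + 1) n (by simp) (by simp)]
  rw [← ShortComplex.exact_unop_iff, ShortComplex.moduleCat_exact_iff]
  intro (x : (PR X).complex.X (n + 1) ⟶ M) (hx : (PR X).complex.d (n + 2) (n + 1) ≫ x = 0)
  have h := (PR X).complex_exactAt_succ n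
  rw [HomologicalComplex.exactAt_iff' _ (n + 2) (n + 1) n (by simp) (by simp)] at h
  exact ⟨h.descToInjective x hx, h.comp_descToInjective x hx⟩

/-- `fromLeftDerivedZero` is natural in the functor. -/
lemma fromLDZ_nat {F G : ModuleCat.{0} R ⥤ (ModuleCat.{0} R)ᵒᵖ} [F.Additive] [G.Additive] (α : F ⟶ G)
    (X : ModuleCat.{0} R) : (NatTrans.leftDerived α 0).app X ≫ G.fromLeftDerivedZero.app X =
      F.fromLeftDerivedZero.app X ≫ α.app X := by
  have h1 : HomologicalComplex.homologyMap
      ((NatTrans.mapHomologicalComplex α _).app (PR X).complex) 0 ≫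
        (ChainComplex.isoHomologyι₀ _).hom =
      (ChainComplex.isoHomologyι₀ _).hom ≫ HomologicalComplex.opcyclesMap
        ((NatTrans.mapHomologicalComplex α _).app (PR X).complex) 0 :=
    HomologicalComplex.homologyι_naturality _ _
  have h2 : HomologicalComplex.opcyclesMap
        ((NatTrans.mapHomologicalComplex α _).app (PR X).complex) 0 ≫
        (PR X).fromLeftDerivedZero' G = (PR X).fromLeftDerivedZero' F ≫ α.app X := by
    rw [← cancel_epi (HomologicalComplex.pOpcycles _ _)]
    refine (HomologicalComplex.p_opcyclesMap_assoc _ _ _).trans ?_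
    refine (congrArg _ (ProjectiveResolution.pOpcycles_comp_fromLeftDerivedZero' _ _)).trans ?_
    refine Eq.trans ?_ (ProjectiveResolution.pOpcycles_comp_fromLeftDerivedZero'_assoc _ _ _).symm
    exact (α.naturality _).symm
  have h3 : (NatTrans.leftDerived α 0).app X ≫ ((PR X).isoLeftDerivedObj G 0).hom =
      ((PR X).isoLeftDerivedObj F 0).hom ≫ HomologicalComplex.homologyMap
        ((NatTrans.mapHomologicalComplex α _).app (PR X).complex) 0 := by
    have := (PR X).leftDerived_app_eq α 0
    rw [← Category.assoc] at this
    exact (Iso.eq_comp_inv _).1 this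
  rw [(PR X).fromLeftDerivedZero_eq, (PR X).fromLeftDerivedZero_eq]
  refine (Category.assoc _ _ _).symm.trans ?_
  refine (congrArg (fun t => t ≫ _) h3).trans ?_
  refine (Category.assoc _ _ _).trans ?_
  refine (congrArg (fun t => _ ≫ t) ((Category.assoc _ _ _).symm.trans
    (congrArg (fun t => t ≫ _) h1))).trans ?_
  refine (congrArg (fun t => _ ≫ t) ((Category.assoc _ _ _).trans
    (congrArg (fun t => _ ≫ t) h2))).trans ?_
  refine Eq.trans ?_ (Category.assoc _ _ _).symm
  exact congrArg (fun t => _ ≫ t) (Category.assoc _ _ _).symm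

/-- `Hom(-, M)` turns colimits into limits. -/
instance (M : ModuleCat.{0} R) : PreservesFiniteColimits (yo M) := by
  have h1 : PreservesLimits ((linearYoneda R (ModuleCat.{0} R)).obj M ⋙ forget (ModuleCat.{0} R)) :=
    (inferInstance : PreservesLimits (yoneda.obj M))
  have h2 : PreservesLimits ((linearYoneda R (ModuleCat.{0} R)).obj M) :=
    preservesLimits_of_reflects_of_preserves _ (forget (ModuleCat.{0} R))
  have h3 : PreservesFiniteLimits ((linearYoneda R (ModuleCat.{0} R)).obj M) :=
    PreservesLimits.preservesFiniteLimits _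
  exact preservesFiniteColimits_rightOp _

/-- `Hom(X, M) ≅ Ext^0(X, M)`. -/
noncomputable def E0 (X M : ModuleCat.{0} R) :
    ((linearYoneda R (ModuleCat.{0} R)).obj M).obj (op X) ≅ E 0 X M :=
  (asIso ((yo M).fromLeftDerivedZero.app X)).unop

lemma E0_nat (X : ModuleCat.{0} R) {M N : ModuleCat.{0} R} (f : M ⟶ N) :
    ((linearYoneda R (ModuleCat.{0} R)).map f).app (op X) ≫ (E0 X N).hom =
      (E0 X M).hom ≫ ((Ext R (ModuleCat.{0} R) 0).obj (op X)).map f :=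
  Quiver.Hom.op_inj (fromLDZ_nat (yoMap f) X).symm

lemma E0_natX {X Y : ModuleCat.{0} R} (g : X ⟶ Y) (M : ModuleCat.{0} R)  :
    ((linearYoneda R (ModuleCat.{0} R)).obj M).map g.op ≫ (E0 X M).hom =
      (E0 Y M).hom ≫ ((Ext R (ModuleCat.{0} R) 0).map g.op).app M :=
  Quiver.Hom.op_inj ((yo M).fromLeftDerivedZero.naturality g).symm

/-! ### Local cohomology as a colimit of `Ext` modules -/

variable (J : Ideal R)

/-- Local cohomology `H^n_J(M)`. -/
noncomputable abbrev H (n : ℕ) (M : ModuleCat.{0} R) : ModuleCat.{0} R := (localCohomology J n).obj M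

/-- Functoriality of `H^n_J`. -/
noncomputable abbrev Hmap (n : ℕ) {M N : ModuleCat.{0} R} (f : M ⟶ N) : H J n M ⟶ H J n N :=
  (localCohomology J n).map f

/-- The module `R / J ^ t`. -/
noncomputable abbrev XX (t : ℕ) : ModuleCat.{0} R := ModuleCat.of R (R ⧸ J ^ t)

/-- The projection `R / J ^ s ⟶ R / J ^ t` for `t ≤ s`. -/
noncomputable def qq {t s : ℕ} (h : t ≤ s) : XX J s ⟶ XX J t :=
  (localCohomology.ringModIdeals (localCohomology.idealPowersDiagram J)).map (homOfLE h).op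

/-- The cocone of the modules `Ext^n(R / J ^ t, M)` with apex `H^n_J(M)`. -/
noncomputable def coc (n : ℕ) (M : ModuleCat.{0} R) :
    Cocone (localCohomology.diagram (localCohomology.idealPowersDiagram J) n ⋙
      (evaluation _ _).obj M) :=
  ((evaluation _ _).obj M).mapCocone
    (colimit.cocone (localCohomology.diagram (localCohomology.idealPowersDiagram J) n))

/-- `H^n_J(M)` is the colimit of the modules `Ext^n(R / J ^ t, M)`; colimits of functors are
computed pointwise. -/
noncomputable def isC (n : ℕ) (M : ModuleCat.{0} R) : IsColimit (coc J n M) :=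
  isColimitOfPreserves ((evaluation _ _).obj M) (colimit.isColimit _)

/-- The canonical map `Ext^n(R / J ^ t, M) ⟶ H^n_J(M)`. -/
noncomputable def ιH (n t : ℕ) (M : ModuleCat.{0} R) : E n (XX J t) M ⟶ H J n M :=
  (coc J n M).ι.app (op (op t))

lemma ιH_nat (n t : ℕ) {M N : ModuleCat.{0} R} (f : M ⟶ N) :
    ιH J n t M ≫ Hmap J n f = ((Ext R (ModuleCat.{0} R) n).obj (op (XX J t))).map f ≫ ιH J n t N :=
  ((colimit.ι (localCohomology.diagram (localCohomology.idealPowersDiagram J) n)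
    (op (op t))).naturality f).symm

lemma ιH_trans (n : ℕ) {t s : ℕ} (h : t ≤ s) (M : ModuleCat.{0} R) :
    ((Ext R (ModuleCat.{0} R) n).map (qq J h).op).app M ≫ ιH J n s M = ιH J n t M :=
  (coc J n M).w (homOfLE h).op.op

lemma ιH_rep {n : ℕ} {M : ModuleCat.{0} R} (x : H J n M) : ∃ t, ∃ y : E n (XX J t) M,
    ιH J n t M y = x := by
  obtain ⟨t, y, hy⟩ := Concrete.isColimit_exists_rep _ (isC J n M) x
  exact ⟨t.unop.unop, y, hy⟩

lemma ιH_zero {n t : ℕ} {M : ModuleCat.{0} R} (y : E n (XX J t) M) (hy : ιH J n t M y = 0) :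
    ∃ s, ∃ h : t ≤ s, ((Ext R (ModuleCat.{0} R) n).map (qq J h).op).app M y = 0 := by
  obtain ⟨k, f, g, hfg⟩ := Concrete.isColimit_exists_of_rep_eq _ (isC J n M) y
    (0 : E n (XX J t) M) (i := op (op t)) (j := op (op t)) (hy.trans (map_zero (ιH J n t M).hom).symm)
  refine ⟨k.unop.unop, leOfHom f.unop.unop, ?_⟩
  refine (show _ = _ from hfg).trans (map_zero (ModuleCat.Hom.hom _))

/-- The universal property of `H^n_J(M)` as a colimit. -/
noncomputable def descH {n : ℕ} {M Z : ModuleCat.{0} R} (g : ∀ t, E n (XX J t) M ⟶ Z)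
    (hg : ∀ t s (h : t ≤ s), ((Ext R (ModuleCat.{0} R) n).map (qq J h).op).app M ≫ g s = g t) :
    H J n M ⟶ Z :=
  (isC J n M).desc { pt := Z, ι := { app := fun t => g t.unop.unop, naturality := fun _ _ h =>
    (show _ from hg _ _ (leOfHom h.unop.unop)).trans (Category.comp_id _).symm } }

lemma ιH_descH {n : ℕ} {M Z : ModuleCat.{0} R} (g : ∀ t, E n (XX J t) M ⟶ Z)
    (hg : ∀ t s (h : t ≤ s), ((Ext R (ModuleCat.{0} R) n).map (qq J h).op).app M ≫ g s = g t) (t : ℕ) :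
    ιH J n t M ≫ descH J g hg = g t :=
  (isC J n M).fac _ (op (op t))

/-- The connecting homomorphism of the long exact sequence of local cohomology. -/
noncomputable def δH {S : ShortComplex (ModuleCat.{0} R)} (hS : S.ShortExact) (n : ℕ) :
    H J n S.X₃ ⟶ H J (n + 1) S.X₁ :=
  descH J (fun t => dl (XX J t) hS n ≫ ιH J (n + 1) t S.X₁) (by
    intro t s h
    rw [← Category.assoc, ← dl_nat, Category.assoc, ιH_trans])

variable {J}

lemma ιH_δH {S : ShortComplex (ModuleCat.{0} R)} (hS : S.ShortExact) (n t : ℕ) :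
    ιH J n t S.X₃ ≫ δH J hS n = dl (XX J t) hS n ≫ ιH J (n + 1) t S.X₁ :=
  ιH_descH J _ _ t

lemma app_eq {A B C D : ModuleCat.{0} R} {f : A ⟶ B} {g : B ⟶ C} {h : A ⟶ D} {k : D ⟶ C}
    (w : f ≫ g = h ≫ k) (x : A) : g (f x) = k (h x) :=
  congrArg (fun φ : A ⟶ C => φ x) w

lemma trans_apply {n : ℕ} {t s : ℕ} (h : t ≤ s) {M : ModuleCat.{0} R} (y : E n (XX J t) M) :
    ιH J n s M (((Ext R (ModuleCat.{0} R) n).map (qq J h).op).app M y) = ιH J n t M y :=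
  congrArg (fun φ : E n (XX J t) M ⟶ _ => φ y) (ιH_trans J n h M)

/-- Exactness passes from the modules `Ext^n(R/J^t, -)` to their colimit over `t`. -/
lemma exact_of_stage {n₁ n₂ n₃ : ℕ} {A B C : ModuleCat.{0} R}
    {f : H J n₁ A ⟶ H J n₂ B} {g : H J n₂ B ⟶ H J n₃ C}
    (f' : ∀ t, E n₁ (XX J t) A ⟶ E n₂ (XX J t) B) (g' : ∀ t, E n₂ (XX J t) B ⟶ E n₃ (XX J t) C)
    (hf : ∀ t, ιH J n₁ t A ≫ f = f' t ≫ ιH J n₂ t B)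
    (hg : ∀ t, ιH J n₂ t B ≫ g = g' t ≫ ιH J n₃ t C)
    (nat : ∀ t s (h : t ≤ s), ((Ext R (ModuleCat.{0} R) n₂).map (qq J h).op).app B ≫ g' s =
      g' t ≫ ((Ext R (ModuleCat.{0} R) n₃).map (qq J h).op).app C)
    (ex : ∀ t, Function.Exact (f' t) (g' t)) : Function.Exact f g := by
  intro x
  constructor
  · intro hx
    obtain ⟨t, y, rfl⟩ := ιH_rep J x
    have h1 : ιH J n₃ t C (g' t y) = 0 := (app_eq (hg t) y).symm.trans hx
    obtain ⟨s, h, hs⟩ := ιH_zero J _ h1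
    have h2 : g' s (((Ext R (ModuleCat.{0} R) n₂).map (qq J h).op).app B y) = 0 :=
      (app_eq (nat t s h) y).trans hs
    obtain ⟨z, hz⟩ := (ex s _).1 h2
    refine ⟨ιH J n₁ s A z, (app_eq (hf s) z).trans ?_⟩
    rw [hz, trans_apply]
  · rintro ⟨w, rfl⟩
    obtain ⟨t, y, rfl⟩ := ιH_rep J w
    rw [app_eq (hf t) y, app_eq (hg t), (ex t).apply_apply_eq_zero, map_zero]

lemma H_exact₂ {S : ShortComplex (ModuleCat.{0} R)} (hS : S.ShortExact) (n : ℕ) :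
    Function.Exact (Hmap J n S.f) (Hmap J n S.g) :=
  exact_of_stage _ _ (fun t => ιH_nat J n t S.f) (fun t => ιH_nat J n t S.g)
    (fun _ _ h => (((Ext R (ModuleCat.{0} R) n).map (qq J h).op).naturality S.g).symm)
    (fun t => E_exact₂ (XX J t) hS n)

lemma H_exact₃ {S : ShortComplex (ModuleCat.{0} R)} (hS : S.ShortExact) (n : ℕ) :
    Function.Exact (Hmap J n S.g) (δH J hS n) :=
  exact_of_stage _ _ (fun t => ιH_nat J n t S.g) (fun t => ιH_δH hS n t)
    (fun _ _ h => (dl_nat (qq J h) hS n).symm)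
    (fun t => E_exact₃ (XX J t) hS n)

lemma H_exact₁ {S : ShortComplex (ModuleCat.{0} R)} (hS : S.ShortExact) (n : ℕ) :
    Function.Exact (δH J hS n) (Hmap J (n + 1) S.f) :=
  exact_of_stage _ _ (fun t => ιH_δH hS n t) (fun t => ιH_nat J (n + 1) t S.f)
    (fun _ _ h => (((Ext R (ModuleCat.{0} R) (n + 1)).map (qq J h).op).naturality S.f).symm)
    (fun t => E_exact₁ (XX J t) hS n)

lemma Hmap_smul (n : ℕ) (M : ModuleCat.{0} R) (r : R) (x : H J n M) :
    Hmap J n (r • 𝟙 M) x = r • x := by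
  obtain ⟨t, y, rfl⟩ := ιH_rep J x
  refine (app_eq (ιH_nat J n t (r • 𝟙 M)) y).trans ?_
  rw [E_scalar]
  exact map_smul (ιH J n t M).hom r y

lemma H_torsion (n : ℕ) (M : ModuleCat.{0} R) (x : H J n M) :
    ∃ t, ∀ a ∈ J ^ t, a • x = 0 := by
  obtain ⟨t, y, rfl⟩ := ιH_rep J x
  refine ⟨t, fun a ha => ?_⟩
  have h0 : a • 𝟙 (XX J t) = (0 : R) • 𝟙 (XX J t) := by
    refine ModuleCat.hom_ext (LinearMap.ext fun (z : R ⧸ J ^ t) => ?_)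
    change a • z = (0 : R) • z
    obtain ⟨z, rfl⟩ := Ideal.Quotient.mk_surjective z
    rw [zero_smul]
    exact Ideal.Quotient.eq_zero_iff_mem.2 (Ideal.mul_mem_right _ _ ha)
  have h1 : a • 𝟙 (E n (XX J t) M) = (0 : R) • 𝟙 (E n (XX J t) M) := by
    rw [← E_scalarX, ← E_scalarX, h0]
  have h2 : a • y = (0 : R) • y :=
    congrArg (fun φ : E n (XX J t) M ⟶ E n (XX J t) M => φ y) h1
  have h3 := map_smul (ιH J n t M).hom a y
  refine h3.symm.trans ?_
  rw [h2, zero_smul, map_zero]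

lemma H_inj (n : ℕ) (M : ModuleCat.{0} R) [Injective M] (x : H J (n + 1) M) : x = 0 := by
  obtain ⟨t, y, rfl⟩ := ιH_rep J x
  have := (ModuleCat.isZero_iff_subsingleton (M := E (n + 1) (XX J t) M)).1 (E_inj _ _ _)
  rw [Subsingleton.elim y 0, map_zero]

lemma XX_hom_ext {t : ℕ} {M : ModuleCat.{0} R} {φ ψ : XX J t ⟶ M}
    (h : φ (Ideal.Quotient.mk (J ^ t) 1) = ψ (Ideal.Quotient.mk (J ^ t) 1)) : φ = ψ := by
  refine ModuleCat.hom_ext (LinearMap.ext fun (z : R ⧸ J ^ t) => ?_)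
  obtain ⟨z, rfl⟩ := Ideal.Quotient.mk_surjective z
  have : Ideal.Quotient.mk (J ^ t) z = z • Ideal.Quotient.mk (J ^ t) 1 :=
    Algebra.algebraMap_eq_smul_one z
  rw [this]
  exact (map_smul φ.hom z _).trans ((congrArg (z • ·) h).trans (map_smul ψ.hom z _).symm)

/-- Evaluation at `1` of a homomorphism out of `R / J ^ t`. -/
noncomputable def ev (J : Ideal R) (t : ℕ) (M : ModuleCat.{0} R) :
    ((linearYoneda R (ModuleCat.{0} R)).obj M).obj (op (XX J t)) ⟶ M :=
  ModuleCat.ofHom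
    { toFun := fun φ : XX J t ⟶ M => φ (Ideal.Quotient.mk (J ^ t) 1)
      map_add' := fun _ _ => rfl
      map_smul' := fun _ _ => rfl }

lemma qq_one {t s : ℕ} (h : t ≤ s) :
    (qq J h) (Ideal.Quotient.mk (J ^ s) 1) = Ideal.Quotient.mk (J ^ t) 1 := rfl

/-- The map `H^0_J(M) ⟶ M` induced by evaluation at `1` on `Hom(R / J ^ t, M)`. -/
noncomputable def H0 (J : Ideal R) (M : ModuleCat.{0} R) : H J 0 M ⟶ M :=
  descH J (fun t => (E0 (XX J t) M).inv ≫ ev J t M) (by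
    intro t s h
    rw [← cancel_epi (E0 (XX J t) M).hom, ← Category.assoc, ← E0_natX, Category.assoc,
      Iso.hom_inv_id_assoc, Iso.hom_inv_id_assoc]
    rfl)

lemma ιH_H0 (t : ℕ) (M : ModuleCat.{0} R) :
    (E0 (XX J t) M).hom ≫ ιH J 0 t M ≫ H0 J M = ev J t M := by
  rw [H0, ιH_descH, Iso.hom_inv_id_assoc]

lemma H0_rep {M : ModuleCat.{0} R} (x : H J 0 M) : ∃ t, ∃ φ : XX J t ⟶ M,
    ιH J 0 t M ((E0 (XX J t) M).hom φ) = x := by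
  obtain ⟨t, y, rfl⟩ := ιH_rep J x
  refine ⟨t, (E0 (XX J t) M).inv y, ?_⟩
  congr 1
  exact congrArg (fun f : E 0 (XX J t) M ⟶ _ => f y) (E0 (XX J t) M).inv_hom_id

lemma H0_apply {t : ℕ} {M : ModuleCat.{0} R} (φ : XX J t ⟶ M) :
    H0 J M (ιH J 0 t M ((E0 (XX J t) M).hom φ)) = φ (Ideal.Quotient.mk (J ^ t) 1) :=
  congrArg (fun f : ((linearYoneda R (ModuleCat.{0} R)).obj M).obj (op (XX J t)) ⟶ M => f φ)
    (ιH_H0 t M)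

lemma H0_injective (M : ModuleCat.{0} R) : Function.Injective (H0 J M) := by
  refine (injective_iff_map_eq_zero (H0 J M).hom).2 fun x hx => ?_
  obtain ⟨t, φ, rfl⟩ := H0_rep x
  have h1 : φ = 0 := XX_hom_ext ((H0_apply φ).symm.trans hx)
  rw [h1]
  exact (congrArg _ (map_zero (E0 (XX J t) M).hom.hom)).trans (map_zero (ιH J 0 t M).hom)

lemma H0_range (M : ModuleCat.{0} R) (m : M) (t : ℕ) (hm : ∀ a ∈ J ^ t, a • m = 0) :
    ∃ x, H0 J M x = m := by
  let φ : XX J t ⟶ M := ModuleCat.ofHom ((J ^ t).liftQ (LinearMap.toSpanSingleton R M m)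
    (fun a ha => hm a ha))
  refine ⟨ιH J 0 t M ((E0 (XX J t) M).hom φ), (H0_apply φ).trans ?_⟩
  exact one_smul R m

lemma H0_nat {M N : ModuleCat.{0} R} (f : M ⟶ N) (x : H J 0 M) :
    H0 J N (Hmap J 0 f x) = f (H0 J M x) := by
  obtain ⟨t, φ, rfl⟩ := H0_rep x
  have h1 := app_eq (ιH_nat J 0 t f) ((E0 (XX J t) M).hom φ)
  have h2 := app_eq (E0_nat (XX J t) f) φ
  rw [h1, ← h2]
  erw [H0_apply, H0_apply]
  rfl

/-! ### Unbundled modules and `J`-power torsion -/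

variable (J)

/-- Local cohomology of an unbundled module. -/
noncomputable abbrev LC (n : ℕ) (M : Type) [AddCommGroup M] [Module R M] : Type :=
  H J n (ModuleCat.of R M)

/-- The linear map induced on local cohomology. -/
noncomputable def lcMap (n : ℕ) {M N : Type} [AddCommGroup M] [Module R M] [AddCommGroup N]
    [Module R N] (f : M →ₗ[R] N) : LC J n M →ₗ[R] LC J n N :=
  (Hmap J n (ModuleCat.ofHom f)).hom

/-- The submodule of elements killed by a power of `J`. -/
def gam (M : Type) [AddCommGroup M] [Module R M] : Submodule R M where
  carrier := {m | ∃ t, ∀ a ∈ J ^ t, a • m = 0}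
  add_mem' := by
    rintro x y ⟨s, hs⟩ ⟨t, ht⟩
    refine ⟨s + t, fun a ha => ?_⟩
    rw [smul_add, hs a (Ideal.pow_le_pow_right (by omega) ha),
      ht a (Ideal.pow_le_pow_right (by omega) ha), add_zero]
  zero_mem' := ⟨0, fun a _ => smul_zero a⟩
  smul_mem' := by
    rintro r x ⟨s, hs⟩
    exact ⟨s, fun a ha => by rw [smul_comm, hs a ha, smul_zero]⟩

/-- Every element is killed by a power of `J`. -/
def IsTors (M : Type) [AddCommGroup M] [Module R M] : Prop :=
  ∀ m : M, ∃ t, ∀ a ∈ J ^ t, a • m = 0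

variable {J}
variable {A B C : Type} [AddCommGroup A] [Module R A] [AddCommGroup B] [Module R B]
  [AddCommGroup C] [Module R C]

/-- The long exact sequence of local cohomology. -/
lemma lc_les {f : A →ₗ[R] B} {g : B →ₗ[R] C} (hf : Function.Injective f)
    (hg : Function.Surjective g) (h : Function.Exact f g) (n : ℕ) :
    ∃ δ : LC J n C →ₗ[R] LC J (n + 1) A, Function.Exact (lcMap J n f) (lcMap J n g) ∧
      Function.Exact (lcMap J n g) δ ∧ Function.Exact δ (lcMap J (n + 1) f) := by
  let S : ShortComplex (ModuleCat.{0} R) := ShortComplex.mk (ModuleCat.ofHom f) (ModuleCat.ofHom g)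
    (ModuleCat.hom_ext (LinearMap.ext fun x => h.apply_apply_eq_zero x))
  have hS : S.ShortExact :=
    { exact := (ShortComplex.ShortExact.moduleCat_exact_iff_function_exact S).2 h
      mono_f := (ModuleCat.mono_iff_injective _).2 hf
      epi_g := (ModuleCat.epi_iff_surjective _).2 hg }
  exact ⟨(δH J hS n).hom, H_exact₂ hS n, H_exact₃ hS n, H_exact₁ hS n⟩

lemma lcMap_smul (n : ℕ) (r : R) (x : LC J n A) :
    lcMap J n (LinearMap.lsmul R A r) x = r • x := by
  exact Hmap_smul n (ModuleCat.of R A) r x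

lemma lcMap_comp (n : ℕ) (f : A →ₗ[R] B) (g : B →ₗ[R] C) (x : LC J n A) :
    lcMap J n (g ∘ₗ f) x = lcMap J n g (lcMap J n f x) :=
  congrArg (fun φ : H J n (ModuleCat.of R A) ⟶ H J n (ModuleCat.of R C) => φ x)
    ((localCohomology J n).map_comp (ModuleCat.ofHom f) (ModuleCat.ofHom g))

/-- Each element of `H^n_J(A)` comes from some `Ext^n(R / J ^ t, A)`, which `J ^ t` kills. -/
lemma lc_isTors (n : ℕ) : IsTors J (LC J n A) := H_torsion n _

lemma lc_inj [Module.Injective R A] (n : ℕ) (x : LC J (n + 1) A) : x = 0 := by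
  have : Injective (ModuleCat.of R A) := Module.injective_object_of_injective_module R A
  exact H_inj n (ModuleCat.of R A) x

variable (J A) in
/-- The map `H^0_J(A) → A`, which identifies `H^0_J(A)` with the `J`-power torsion of `A`. -/
noncomputable def lc0 : LC J 0 A →ₗ[R] A := (H0 J (ModuleCat.of R A)).hom

lemma lc0_injective : Function.Injective (lc0 J A) := H0_injective (ModuleCat.of R A)

lemma lc0_surj {m : A} (hm : m ∈ gam J A) : ∃ x, lc0 J A x = m := by
  obtain ⟨t, ht⟩ := hm
  exact H0_range (ModuleCat.of R A) m t ht

lemma lc0_nat (f : A →ₗ[R] B) (x : LC J 0 A) : lc0 J B (lcMap J 0 f x) = f (lc0 J A x) :=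
  H0_nat (ModuleCat.ofHom f) x

lemma lc0_mem (x : LC J 0 A) : lc0 J A x ∈ gam J A := by
  obtain ⟨t, ht⟩ := lc_isTors 0 x
  exact ⟨t, fun a ha => by rw [← map_smul, ht a ha, map_zero]⟩

lemma isTors_gam : IsTors J (gam J A) := fun m => by
  obtain ⟨t, ht⟩ := m.2
  exact ⟨t, fun a ha => Subtype.ext (ht a ha)⟩

lemma IsTors.of_surj (hA : IsTors J A) (f : A →ₗ[R] B) (hf : Function.Surjective f) :
    IsTors J B := fun m => by
  obtain ⟨m, rfl⟩ := hf m
  obtain ⟨t, ht⟩ := hA m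
  exact ⟨t, fun a ha => by rw [← map_smul, ht a ha, map_zero]⟩

/-- A finitely generated torsion module is killed by a single power of `J`. -/
lemma IsTors.exists_pow [Module.Finite R A] (hA : IsTors J A) :
    ∃ c, ∀ a ∈ J ^ c, ∀ x : A, a • x = 0 := by
  obtain ⟨S, hS⟩ := Module.Finite.fg_top (R := R) (M := A)
  choose t ht using hA
  refine ⟨S.sup t, fun a ha x => ?_⟩
  have h1 : (⊤ : Submodule R A) ≤ LinearMap.ker (LinearMap.lsmul R A a) := by
    rw [← hS, Submodule.span_le]
    intro x hx
    exact ht x a (Ideal.pow_le_pow_right (Finset.le_sup hx) ha)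
  exact h1 (Submodule.mem_top (x := x))

/-! ### Vanishing of higher local cohomology on torsion modules -/

/-- Over a Noetherian ring the `J`-power torsion of an injective module is injective: by the
Artin–Rees lemma a homomorphism from an ideal `I` to the torsion factors through
the image of `I` in some `R / J ^ u`. -/
lemma gam_injective [IsNoetherianRing R] [Module.Injective R A] :
    Module.Injective R (gam J A) := by
  apply Module.Baer.injective
  intro I g
  have hfin : IsTors J (LinearMap.range g) := fun ⟨m, hm⟩ => by
    obtain ⟨t, ht⟩ := isTors_gam m
    exact ⟨t, fun a ha => Subtype.ext (ht a ha)⟩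
  obtain ⟨c, hc⟩ := hfin.exists_pow
  have hc' : ∀ a ∈ J ^ c, ∀ x : I, a • g x = 0 := fun a ha x =>
    congrArg Subtype.val (hc a ha ⟨g x, x, rfl⟩)
  obtain ⟨k, hk⟩ := Ideal.exists_pow_inf_eq_pow_smul J (I : Submodule R R)
  have hk := hk (k + c) (by omega)
  rw [Nat.add_sub_cancel_left] at hk
  have key : ∀ x (hx : x ∈ I), x ∈ J ^ (k + c) → g ⟨x, hx⟩ = 0 := by
    intro x hx hxJ
    have h1 : x ∈ J ^ c • (I : Submodule R R) := by
      have : x ∈ J ^ (k + c) • (⊤ : Submodule R R) ⊓ I := ⟨by simpa using hxJ, hx⟩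
      rw [hk] at this
      exact Submodule.smul_mono le_rfl inf_le_right this
    have h2 : ∃ h : x ∈ I, g ⟨x, h⟩ = 0 := by
      refine Submodule.smul_induction_on h1 ?_ ?_
      · intro a ha y hy
        refine ⟨I.mul_mem_left a hy, ?_⟩
        have := hc' a ha ⟨y, hy⟩
        rwa [← map_smul] at this
      · rintro x y ⟨hx, hx'⟩ ⟨hy, hy'⟩
        refine ⟨I.add_mem hx hy, ?_⟩
        have : g (⟨x, hx⟩ + ⟨y, hy⟩) = 0 := by rw [map_add, hx', hy', add_zero]
        exact this
    exact h2.2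
  let φ : I →ₗ[R] R ⧸ J ^ (k + c) := (J ^ (k + c)).mkQ ∘ₗ I.subtype
  let g' : I →ₗ[R] A := (gam J A).subtype ∘ₗ g
  have hker : LinearMap.ker φ ≤ LinearMap.ker g' := by
    intro x hx
    have h1 : (x : R) ∈ J ^ (k + c) := Ideal.Quotient.eq_zero_iff_mem.1 hx
    have h2 := key x x.2 h1
    exact congrArg Subtype.val h2
  have hinj : Function.Injective ((LinearMap.ker φ).liftQ φ le_rfl) :=
    LinearMap.ker_eq_bot.1 (Submodule.ker_liftQ_eq_bot _ _ _ le_rfl)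
  obtain ⟨h, hh⟩ := Module.Injective.out (R := R) (Q := A) _ hinj ((LinearMap.ker φ).liftQ g' hker)
  refine ⟨LinearMap.codRestrict (gam J A) (h ∘ₗ (J ^ (k + c)).mkQ) ?_, ?_⟩
  · intro r
    refine ⟨k + c, fun a ha => ?_⟩
    rw [← map_smul]
    have : (J ^ (k + c)).mkQ (a • r) = 0 :=
      Ideal.Quotient.eq_zero_iff_mem.2 (Ideal.mul_mem_right _ _ ha)
    rw [LinearMap.comp_apply, this, map_zero]
  · intro x hx
    exact Subtype.ext (hh (Submodule.Quotient.mk ⟨x, hx⟩))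

lemma exists_inj_embedding (A : Type) [AddCommGroup A] [Module R A] :
    ∃ (Q : Type) (_ : AddCommGroup Q) (_ : Module R Q) (_ : Module.Injective R Q)
      (f : A →ₗ[R] Q), Function.Injective f := by
  let I := Injective.under (ModuleCat.of R A)
  refine ⟨I, inferInstance, inferInstance, ?_, (Injective.ι (ModuleCat.of R A)).hom, ?_⟩
  · have : Injective (ModuleCat.of R I) := inferInstanceAs (Injective I)
    exact Module.injective_module_of_injective_object R I
  · exact (ModuleCat.mono_iff_injective _).1 inferInstance

/-- A `J`-power torsion module has no higher local cohomology. -/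
theorem lc_tors_eq_zero [IsNoetherianRing R] (i : ℕ) : ∀ (A : Type) [AddCommGroup A] [Module R A],
    IsTors J A → ∀ x : LC J (i + 1) A, x = 0 := by
  induction i with
  | zero =>
    intro A _ _ hA x
    -- embed `A` in the injective torsion module `gam J Q`; `H^0` of the cokernel lifts to `gam J Q`
    obtain ⟨Q, _, _, _, f, hf⟩ := exists_inj_embedding (R := R) A
    have := gam_injective (J := J) (A := Q)
    let f' : A →ₗ[R] gam J Q := f.codRestrict _ fun a => by
      obtain ⟨t, ht⟩ := hA a
      exact ⟨t, fun b hb => by rw [← map_smul, ht b hb, map_zero]⟩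
    have hf' : Function.Injective f' := fun a b h => hf (congrArg Subtype.val h)
    obtain ⟨δ, -, h2, h3⟩ := lc_les (J := J) hf' (LinearMap.range f').mkQ_surjective
      (LinearMap.exact_map_mkQ_range f') 0
    obtain ⟨y, rfl⟩ := (h3 x).1 (lc_inj 0 _)
    apply (h2 y).2
    obtain ⟨q, hq⟩ := (LinearMap.range f').mkQ_surjective (lc0 J _ y)
    obtain ⟨z, hz⟩ := lc0_surj (J := J) (m := q) (isTors_gam q)
    exact ⟨z, lc0_injective (by rw [lc0_nat, hz, hq])⟩
  | succ i ih =>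
    intro A _ _ hA x
    -- dimension shift: the cokernel of `A → gam J Q` is again torsion
    obtain ⟨Q, _, _, _, f, hf⟩ := exists_inj_embedding (R := R) A
    have := gam_injective (J := J) (A := Q)
    let f' : A →ₗ[R] gam J Q := f.codRestrict _ fun a => by
      obtain ⟨t, ht⟩ := hA a
      exact ⟨t, fun b hb => by rw [← map_smul, ht b hb, map_zero]⟩
    have hf' : Function.Injective f' := fun a b h => hf (congrArg Subtype.val h)
    obtain ⟨δ, -, h2, h3⟩ := lc_les (J := J) hf' (LinearMap.range f').mkQ_surjective
      (LinearMap.exact_map_mkQ_range f') (i + 1)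
    obtain ⟨y, rfl⟩ := (h3 x).1 (lc_inj (i + 1) _)
    rw [ih _ (isTors_gam.of_surj _ (LinearMap.range f').mkQ_surjective) y, map_zero]

open Pointwise in
/-- The long exact sequence of `0 → M → M → M / r M → 0` for an `M`-regular element `r`. -/
lemma lc_reg (M : Type) [AddCommGroup M] [Module R M] {J : Ideal R} {r : R}
    (hr : IsSMulRegular M r) (n : ℕ) : ∃ δ : LC J n (QuotSMulTop r M) →ₗ[R] LC J (n + 1) M,
    Function.Exact (lcMap J n (LinearMap.lsmul R M r))
      (lcMap J n (r • (⊤ : Submodule R M)).mkQ) ∧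
    Function.Exact (lcMap J n (r • (⊤ : Submodule R M)).mkQ) δ ∧
    Function.Exact δ (lcMap J (n + 1) (LinearMap.lsmul R M r)) :=
  lc_les (f := LinearMap.lsmul R M r) hr (Submodule.mkQ_surjective _) (LinearMap.exact_lsmul_mkQ_smul_top M r) n

/-! ### Melkersson's criterion -/

/-- Melkersson's criterion: an `r`-power torsion module `L` is Artinian as soon as the kernel of `r`
is. A submodule `N` is determined, among the submodules below it, by the submodules
`r ^ j (N ∩ ker r ^ (j + 1))` of `ker r`, and these decrease in `j`, so that for a descending
chain of submodules all of them stabilise simultaneously. -/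
theorem isArtinian_of_ker {L : Type} [AddCommGroup L] [Module R L] (r : R)
    (hr : ∀ x : L, ∃ j, r ^ j • x = 0) [IsArtinian R (LinearMap.ker (LinearMap.lsmul R L r))] :
    IsArtinian R L := by
  -- `a N j` is `r ^ j N ∩ ker r`, that is `r ^ j (N ∩ ker r ^ (j + 1))`
  let a (N : Submodule R L) (j : ℕ) : Submodule R (LinearMap.ker (LinearMap.lsmul R L r)) :=
    (Submodule.map (LinearMap.lsmul R L (r ^ j)) N).comap
      (LinearMap.ker (LinearMap.lsmul R L r)).subtype
  have amono : ∀ {N N' : Submodule R L} {j j' : ℕ}, N ≤ N' → j' ≤ j → a N j ≤ a N' j' := by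
    rintro N N' j j' hN hj ⟨x, hx⟩ ⟨y, hy, hyx⟩
    obtain ⟨k, rfl⟩ := Nat.exists_eq_add_of_le hj
    refine ⟨r ^ k • y, N'.smul_mem _ (hN hy), ?_⟩
    rw [← hyx]
    simp [smul_smul, pow_add, mul_comm]
  have aeq : ∀ {N N' : Submodule R L}, N' ≤ N → (∀ j, a N j ≤ a N' j) → N' = N := by
    intro N N' hN h
    refine le_antisymm hN ?_
    have : ∀ j, ∀ x ∈ N, r ^ j • x = 0 → x ∈ N' := by
      intro j
      induction j with
      | zero =>
        intro x _ h0
        rw [pow_zero, one_smul] at h0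
        rw [h0]
        exact N'.zero_mem
      | succ j ih =>
        intro x hx h0
        have hk : r ^ j • x ∈ LinearMap.ker (LinearMap.lsmul R L r) := by
          rw [LinearMap.mem_ker, LinearMap.lsmul_apply, smul_smul, ← pow_succ', h0]
        obtain ⟨y, hy, hyx⟩ := h j (show (⟨r ^ j • x, hk⟩ : LinearMap.ker _) ∈ a N j from
          ⟨x, hx, rfl⟩)
        have hyx' : r ^ j • y = r ^ j • x := hyx
        have := ih (x - y) (N.sub_mem hx (hN hy)) (by rw [smul_sub, hyx', sub_self])
        simpa using N'.add_mem this hy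
    intro x hx
    obtain ⟨j, hj⟩ := hr x
    exact this j x hx hj
  rw [← monotone_stabilizes_iff_artinian]
  intro F
  let N (n : ℕ) : Submodule R L := OrderDual.ofDual (F n)
  have hN : ∀ {m n}, m ≤ n → N n ≤ N m := fun h => F.monotone h
  obtain ⟨p, hp⟩ := IsArtinian.monotone_stabilizes
    (⟨fun n => OrderDual.toDual (a (N n) n), fun m n h => amono (hN h) h⟩ : ℕ →o (Submodule R _)ᵒᵈ)
  have hq : ∀ j, ∃ q, ∀ n, q ≤ n → a (N q) j = a (N n) j := fun j =>
    IsArtinian.monotone_stabilizes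
      (⟨fun n => OrderDual.toDual (a (N n) j), fun m n h => amono (hN h) le_rfl⟩ :
        ℕ →o (Submodule R _)ᵒᵈ)
  choose q hq using hq
  -- from `p` on the diagonal controls all `j ≥ p`, and `q` controls the finitely many `j < p`
  refine ⟨p + (Finset.range p).sup q, fun m hm => ?_⟩
  refine (aeq (hN hm) fun j => ?_).symm
  by_cases hj : j < p
  · have h1 : q j ≤ (Finset.range p).sup q := Finset.le_sup (Finset.mem_range.2 hj)
    exact ((hq j _ (by omega)).symm.trans (hq j _ (by omega))).le
  · have h1 : a (N p) p = a (N (m + j)) (m + j) := hp _ (by omega)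
    exact (amono (hN (by omega)) (by omega)).trans
      (h1.le.trans (amono (hN (by omega)) (by omega)))

/-! ### Secondary representation over a Noetherian local ring -/

variable [IsNoetherianRing R]

lemma isArtinian_of_pow_smul [IsLocalRing R] {M : Type} [AddCommGroup M] [Module R M] [Module.Finite R M] (c : ℕ)
    (h : ∀ a ∈ maximalIdeal R ^ c, ∀ x : M, a • x = 0) : IsArtinian R M := by
  let I := maximalIdeal R ^ c
  have : Ring.KrullDimLE 0 (R ⧸ I) := by
    rw [Ring.krullDimLE_zero_iff]
    intro P hP
    have h1 : I ≤ P.comap (Ideal.Quotient.mk I) := by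
      intro x hx
      rw [Ideal.mem_comap, Ideal.Quotient.eq_zero_iff_mem.2 hx]
      exact P.zero_mem
    have h2 : maximalIdeal R ≤ P.comap (Ideal.Quotient.mk I) := Ideal.IsPrime.le_of_pow_le h1
    have h3 : (P.comap (Ideal.Quotient.mk I)) = maximalIdeal R :=
      ((maximalIdeal.isMaximal R).eq_of_le Ideal.IsPrime.ne_top' h2).symm
    have h4 : (P.comap (Ideal.Quotient.mk I)).IsMaximal := h3 ▸ maximalIdeal.isMaximal R
    have h5 := Ideal.map_eq_top_or_isMaximal_of_surjective (Ideal.Quotient.mk I)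
      Ideal.Quotient.mk_surjective h4
    rw [Ideal.map_comap_of_surjective _ Ideal.Quotient.mk_surjective] at h5
    exact h5.resolve_left hP.ne_top
  have : IsArtinianRing (R ⧸ I) := IsNoetherianRing.isArtinianRing_of_krullDimLE_zero
  have hM : Module.IsTorsionBySet R M I := fun x a => h a a.2 x
  let := hM.module
  have : Module.Finite (R ⧸ I) M := Module.Finite.of_restrictScalars_finite R _ _
  have : IsArtinian (R ⧸ I) M := inferInstance
  exact isArtinian_of_surjective_algebraMap (S := R) (R := R ⧸ I) Ideal.Quotient.mk_surjective

variable (R) in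
/-- For an Artinian module `L` there are finitely many primes `p ≠ 𝔪` such that for each `r`
outside them some power of `𝔪` maps `L` into `r L`. Indeed `L` is a finite sum of sup-irreducible
submodules `b`, on each of which every element of `R` acts nilpotently or surjectively, by
Fitting's lemma; the primes are the radicals of the annihilators of the `b`. -/
theorem exists_primes [IsLocalRing R] (L : Type) [AddCommGroup L] [Module R L] [IsArtinian R L] :
    ∃ P : Set (Ideal R), P.Finite ∧ (∀ p ∈ P, p.IsPrime ∧ p ≠ maximalIdeal R) ∧
      ∀ r, (∀ p ∈ P, r ∉ p) → ∃ j, ∀ a ∈ maximalIdeal R ^ j, ∀ x : L, ∃ y, r • y = a • x := by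
  classical
  obtain ⟨s, hs, hirr⟩ := exists_supIrred_decomposition (⊤ : Submodule R L)
  have dich : ∀ b ∈ s, ∀ r : R, r ∈ (Module.annihilator R b).radical ∨
      Function.Surjective (LinearMap.lsmul R b r) := by
    intro b hb r
    obtain ⟨n, hn⟩ := Filter.eventually_atTop.1
      (LinearMap.eventually_codisjoint_ker_pow_range_pow (LinearMap.lsmul R b r))
    have h1 := codisjoint_iff.1 (hn (n + 1) (by omega))
    have h2 := congrArg (Submodule.map b.subtype) h1
    rw [Submodule.map_sup, Submodule.map_subtype_top] at h2
    have hinj := Submodule.map_injective_of_injective b.injective_subtype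
    have hpow : ∀ x : b, ((LinearMap.lsmul R b r) ^ (n + 1)) x = r ^ (n + 1) • x := by
      intro x
      induction n + 1 with
      | zero => simp
      | succ k ih => rw [pow_succ', Module.End.mul_apply, ih, LinearMap.lsmul_apply, smul_smul, pow_succ']
    rcases (hirr hb).2 h2 with h3 | h3
    · left
      refine ⟨n + 1, Module.mem_annihilator.2 fun x => ?_⟩
      have h4 : LinearMap.ker ((LinearMap.lsmul R b r) ^ (n + 1)) = ⊤ :=
        hinj (h3.trans (Submodule.map_subtype_top b).symm)
      have h5 : x ∈ LinearMap.ker ((LinearMap.lsmul R b r) ^ (n + 1)) := h4 ▸ Submodule.mem_top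
      rw [← hpow]
      exact h5
    · right
      intro x
      have h4 : LinearMap.range ((LinearMap.lsmul R b r) ^ (n + 1)) = ⊤ :=
        hinj (h3.trans (Submodule.map_subtype_top b).symm)
      have h5 : x ∈ LinearMap.range ((LinearMap.lsmul R b r) ^ (n + 1)) := h4 ▸ Submodule.mem_top
      obtain ⟨y, hy⟩ := h5
      refine ⟨r ^ n • y, ?_⟩
      rw [← hy, hpow, LinearMap.lsmul_apply, smul_smul, pow_succ']
  have notboth : ∀ b ∈ s, ∀ r : R, r ∈ (Module.annihilator R b).radical →
      ¬ Function.Surjective (LinearMap.lsmul R b r) := by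
    rintro b hb r ⟨n, hn⟩ hsurj
    apply (hirr hb).1
    have hz : ∀ n, (∀ x : b, r ^ n • x = 0) → ∀ x : b, x = 0 := by
      intro n
      induction n with
      | zero => simp
      | succ n ih =>
        intro h
        refine ih fun x => ?_
        obtain ⟨y, rfl⟩ := hsurj x
        rw [LinearMap.lsmul_apply, smul_smul, ← pow_succ, h]
    have : b = ⊥ := by
      rw [Submodule.eq_bot_iff]
      intro x hx
      exact congrArg Subtype.val (hz n (fun x => Module.mem_annihilator.1 hn x) ⟨x, hx⟩)
    rw [this]
    exact isMin_bot
  refine ⟨(s.image fun b => (Module.annihilator R b).radical) \ {maximalIdeal R},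
    (Finset.finite_toSet _).sdiff, ?_, ?_⟩
  · rintro p ⟨hp, hpm⟩
    obtain ⟨b, hb, rfl⟩ := Finset.mem_image.1 hp
    refine ⟨Ideal.isPrime_iff.2 ⟨?_, ?_⟩, hpm⟩
    · intro h
      refine notboth b hb 1 (h ▸ Submodule.mem_top) fun x => ⟨x, ?_⟩
      rw [LinearMap.lsmul_apply, one_smul]
    · intro x y hxy
      by_contra! hcon
      have h1 := (dich b hb x).resolve_left hcon.1
      have h2 := (dich b hb y).resolve_left hcon.2
      refine notboth b hb _ hxy fun z => ?_
      obtain ⟨z, rfl⟩ := h1 z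
      obtain ⟨z, rfl⟩ := h2 z
      exact ⟨z, by simp [smul_smul, mul_comm]⟩
  · intro r hr
    have key : ∀ b ∈ s, ∃ j, ∀ a ∈ maximalIdeal R ^ j, ∀ x ∈ b, ∃ y : L, r • y = a • x := by
      intro b hb
      by_cases hbm : (Module.annihilator R b).radical = maximalIdeal R
      · obtain ⟨j, hj⟩ := Ideal.exists_radical_pow_le_of_fg (Module.annihilator R b)
          (IsNoetherian.noetherian _)
        rw [hbm] at hj
        refine ⟨j, fun a ha x hx => ⟨0, ?_⟩⟩
        rw [smul_zero]
        exact (congrArg Subtype.val (Module.mem_annihilator.1 (hj ha) ⟨x, hx⟩)).symm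
      · have h1 := (dich b hb r).resolve_left
          (hr _ ⟨Finset.mem_image.2 ⟨b, hb, rfl⟩, hbm⟩)
        refine ⟨0, fun a _ x hx => ?_⟩
        obtain ⟨y, hy⟩ := h1 (a • ⟨x, hx⟩)
        exact ⟨y, congrArg Subtype.val hy⟩
    choose! j hj using key
    refine ⟨s.sup j, fun a ha x => ?_⟩
    have h1 : s.sup id ≤ (LinearMap.range (LinearMap.lsmul R L r)).comap (LinearMap.lsmul R L a) :=
      Finset.sup_le fun b hb x hx => hj b hb a (Ideal.pow_le_pow_right (Finset.le_sup hb) ha) x hx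
    rw [hs] at h1
    exact h1 (Submodule.mem_top (x := x))

/-- `M / Γ(M)` has no torsion. -/
lemma gam_quot (M : Type) [AddCommGroup M] [Module R M] [Module.Finite R M] {J : Ideal R} :
    gam J (M ⧸ gam J M) = ⊥ := by
  rw [eq_bot_iff]
  rintro x ⟨t, ht⟩
  obtain ⟨m, rfl⟩ := (gam J M).mkQ_surjective x
  obtain ⟨c, hc⟩ := (isTors_gam (J := J) (A := M)).exists_pow
  refine (Submodule.Quotient.mk_eq_zero _).2 ⟨c + t, fun a ha => ?_⟩
  rw [pow_add] at ha
  refine Submodule.mul_induction_on ha (fun b hb d hd => ?_) (fun b d hb hd => ?_)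
  · have h1 : d • m ∈ gam J M := (Submodule.Quotient.mk_eq_zero _).1 (ht d hd)
    rw [mul_smul]
    exact congrArg Subtype.val (hc b hb ⟨d • m, h1⟩)
  · rw [add_smul, hb, hd, add_zero]

/-- `H^i(M) = H^i(M / Γ(M))` for `i ≥ 1`. -/
lemma lc_gam (M : Type) [AddCommGroup M] [Module R M] {J : Ideal R} (n : ℕ) :
    Function.Bijective (lcMap J (n + 1) (gam J M).mkQ) := by
  have hex : Function.Exact (gam J M).subtype (gam J M).mkQ :=
    LinearMap.exact_subtype_mkQ (gam J M)
  obtain ⟨δ, h1, h2, -⟩ := lc_les (J := J) (gam J M).injective_subtype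
    (gam J M).mkQ_surjective hex (n + 1)
  constructor
  · refine (injective_iff_map_eq_zero _).2 fun x hx => ?_
    obtain ⟨y, rfl⟩ := (h1 x).1 hx
    rw [lc_tors_eq_zero n _ isTors_gam y, map_zero]
  · intro x
    exact (h2 x).1 (lc_tors_eq_zero (n + 1) _ isTors_gam _)

variable [IsLocalRing R]

/-- If `M` is finitely generated without `𝔪`-torsion, prime avoidance yields
an `M`-regular element of `𝔪` outside any finite set of primes different from `𝔪`. -/
lemma exists_reg (M : Type) [AddCommGroup M] [Module R M] [Module.Finite R M]
    (hM : gam (maximalIdeal R) M = ⊥) (P : Set (Ideal R)) (hP : P.Finite)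
    (hP' : ∀ p ∈ P, p.IsPrime ∧ p ≠ maximalIdeal R) :
    ∃ r ∈ maximalIdeal R, IsSMulRegular M r ∧ ∀ p ∈ P, r ∉ p := by
  have h1 : ∀ p ∈ associatedPrimes R M ∪ P, p.IsPrime ∧ p ≠ maximalIdeal R := by
    rintro p (hp | hp)
    · refine ⟨hp.isPrime, ?_⟩
      rintro rfl
      obtain ⟨hp1, x, hx⟩ := isAssociatedPrime_iff_exists_injective_linearMap _ _ |>.1 hp
      have h2 : x (Ideal.Quotient.mk _ 1) ∈ gam (maximalIdeal R) M := by
        refine ⟨1, fun a ha => ?_⟩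
        rw [pow_one] at ha
        rw [← map_smul, ← map_zero x]
        congr 1
        exact Ideal.Quotient.eq_zero_iff_mem.2 (Ideal.mul_mem_right _ _ ha)
      rw [hM, Submodule.mem_bot, ← map_zero x] at h2
      have h3 := hx h2
      have h4 := Ideal.Quotient.eq_zero_iff_mem.1 h3
      exact hp1.ne_top ((Ideal.eq_top_iff_one _).2 h4)
    · exact hP' p hp
  have h2 : ¬ ((maximalIdeal R : Set R) ⊆ ⋃ p ∈ associatedPrimes R M ∪ P, (p : Set R)) := by
    intro h
    obtain ⟨p, hp, hle⟩ := (Ideal.subset_union_prime_finite ((associatedPrimes.finite R M).union hP)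
      (f := id) ⊤ ⊤ (fun p hp _ _ => (h1 p hp).1)).1 h
    exact (h1 p hp).2 ((maximalIdeal.isMaximal R).eq_of_le (h1 p hp).1.ne_top hle).symm
  obtain ⟨r, hr, hr'⟩ := Set.not_subset.1 h2
  simp only [Set.mem_iUnion, not_exists] at hr'
  refine ⟨r, hr, ?_, fun p hp => hr' p (Or.inr hp)⟩
  by_contra hreg
  have h3 : r ∈ ⋃ p ∈ associatedPrimes R M, (p : Set R) := by
    rw [biUnion_associatedPrimes_eq_compl_regular]
    exact hreg
  simp only [Set.mem_iUnion] at h3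
  obtain ⟨p, hp, hrp⟩ := h3
  exact hr' p (Or.inl hp) hrp

/-! ### Artinianness and non-vanishing -/

/-- Local cohomology of a finitely generated module is Artinian. -/
theorem lc_artinian (i : ℕ) : ∀ (M : Type) [AddCommGroup M] [Module R M] [Module.Finite R M],
    IsArtinian R (LC (maximalIdeal R) i M) := by
  induction i with
  | zero =>
    intro M _ _ _
    obtain ⟨c, hc⟩ := (isTors_gam (J := maximalIdeal R) (A := M)).exists_pow
    have := isArtinian_of_pow_smul c hc
    exact isArtinian_of_injective ((lc0 (maximalIdeal R) M).codRestrict _ lc0_mem)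
      (fun x y h => lc0_injective (congrArg Subtype.val h))
  | succ i ih =>
    intro M _ _ _
    let M' := M ⧸ gam (maximalIdeal R) M
    obtain ⟨r, hrm, hreg, -⟩ := exists_reg M' (gam_quot M) ∅ Set.finite_empty (by simp)
    obtain ⟨δ, -, -, h3⟩ := lc_reg (J := maximalIdeal R) M' hreg i
    have := ih (QuotSMulTop r M')
    have hker : IsArtinian R (LinearMap.ker (LinearMap.lsmul R (LC (maximalIdeal R) (i + 1) M') r)) := by
      refine isArtinian_of_surjective (LC (maximalIdeal R) i (QuotSMulTop r M'))
        (δ.codRestrict _ fun x => ?_) ?_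
      · have := h3.apply_apply_eq_zero x
        rwa [lcMap_smul] at this
      · rintro ⟨x, hx⟩
        obtain ⟨y, hy⟩ := (h3 x).1 (by rw [lcMap_smul]; exact hx)
        exact ⟨y, Subtype.ext hy⟩
    have : IsArtinian R (LC (maximalIdeal R) (i + 1) M') := isArtinian_of_ker r fun x => by
      obtain ⟨t, ht⟩ := lc_isTors (i + 1) x
      exact ⟨t, ht _ (Ideal.pow_mem_pow hrm t)⟩
    exact isArtinian_of_injective _ (lc_gam M i).1

/-- Dividing out the `𝔪`-torsion does not change a positive dimension, since the support changes
at most by the closed point. -/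
lemma supportDim_gam (M : Type) [AddCommGroup M] [Module R M] [Module.Finite R M] (n : ℕ)
    (hn : 0 < n) (h : Module.supportDim R M = n) :
    Module.supportDim R (M ⧸ gam (maximalIdeal R) M) = n := by
  have hex : Function.Exact (gam (maximalIdeal R) M).subtype (gam (maximalIdeal R) M).mkQ :=
    LinearMap.exact_subtype_mkQ _
  have h1 := Module.support_of_exact hex (gam (maximalIdeal R) M).injective_subtype
    (gam (maximalIdeal R) M).mkQ_surjective
  obtain ⟨c, hc⟩ := (isTors_gam (J := maximalIdeal R) (A := M)).exists_pow
  have h2 : Module.support R (gam (maximalIdeal R) M) ⊆ {closedPoint R} := by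
    intro p hp
    rw [Module.mem_support_iff_of_finite] at hp
    have h3 : maximalIdeal R ^ c ≤ p.asIdeal :=
      le_trans (fun a ha => Module.mem_annihilator.2 (hc a ha)) hp
    have h4 : maximalIdeal R ≤ p.asIdeal := Ideal.IsPrime.le_of_pow_le h3
    exact PrimeSpectrum.ext ((maximalIdeal.isMaximal R).eq_of_le p.2.ne_top h4).symm
  rcases subsingleton_or_nontrivial (M ⧸ gam (maximalIdeal R) M) with hs | hs
  · exfalso
    rw [Module.support_eq_empty (M := M ⧸ gam (maximalIdeal R) M), Set.union_empty] at h1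
    have h3 : Module.supportDim R M ≤ 0 := by
      rw [Module.supportDim, h1]
      have : Subsingleton (Module.support R (gam (maximalIdeal R) M)) :=
        (Set.subsingleton_singleton.anti h2).coe_sort
      exact Order.krullDim_nonpos_of_subsingleton
    rw [h] at h3
    have : n ≤ 0 := by exact_mod_cast h3
    omega
  · have h3 : closedPoint R ∈ Module.support R (M ⧸ gam (maximalIdeal R) M) :=
      IsLocalRing.closedPoint_mem_support R _
    rw [← h, Module.supportDim, Module.supportDim, h1, Set.union_eq_right.2]
    exact h2.trans (Set.singleton_subset_iff.2 h3)

lemma isTors_of_supportDim (M : Type) [AddCommGroup M] [Module R M] [Module.Finite R M]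
    (h : Module.supportDim R M = 0) : IsTors (maximalIdeal R) M := by
  have h1 := support_of_supportDim_eq_zero R M h
  rw [Module.support_eq_zeroLocus, PrimeSpectrum.zeroLocus_eq_iff] at h1
  obtain ⟨j, hj⟩ := Ideal.exists_radical_pow_le_of_fg (Module.annihilator R M)
    (IsNoetherian.noetherian _)
  rw [h1] at hj
  exact fun m => ⟨j, fun a ha =>
    Module.mem_annihilator.1 (hj (Ideal.pow_right_mono Ideal.le_radical j ha)) m⟩

open Pointwise in
/-- For a finitely generated module `M` of dimension `n + 1`, no power of `𝔪` kills
`H^(n+1)(M)`. This sharpens Grothendieck's non-vanishing theorem. -/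
theorem lc_top (n : ℕ) : ∀ (M : Type) [AddCommGroup M] [Module R M] [Module.Finite R M],
    Module.supportDim R M = (n + 1 : ℕ) → ∀ k,
    ¬ ∀ a ∈ maximalIdeal R ^ k, ∀ x : LC (maximalIdeal R) (n + 1) M, a • x = 0 := by
  induction n with
  | zero =>
    intro M _ _ _ hM k hk
    let M' := M ⧸ gam (maximalIdeal R) M
    have hM' : Module.supportDim R M' = (1 : ℕ) := supportDim_gam M 1 one_pos hM
    have hk' : ∀ a ∈ maximalIdeal R ^ k, ∀ x : LC (maximalIdeal R) 1 M', a • x = 0 := by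
      intro a ha x
      obtain ⟨y, rfl⟩ := (lc_gam M 0).2 x
      rw [← map_smul, hk a ha, map_zero]
    obtain ⟨r, hrm, hreg, -⟩ := exists_reg M' (gam_quot M) ∅ Set.finite_empty (by simp)
    -- `M' / r ^ (k + 1) M'` has dimension `0` and embeds in `H^1(M')`, so `𝔪 ^ k` kills it
    have hreg' : IsSMulRegular M' (r ^ (k + 1)) := hreg.pow _
    have hd := Module.supportDim_quotSMulTop_succ_eq_supportDim hreg'
      (Ideal.pow_mem_of_mem _ hrm _ (Nat.succ_pos k))
    rw [hM'] at hd
    have hd0 : Module.supportDim R (QuotSMulTop (r ^ (k + 1)) M') = 0 := by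
      rw [← ENat.WithBot.add_one_cancel, hd]
      rfl
    have htors := isTors_of_supportDim _ hd0
    obtain ⟨δ, -, h2, -⟩ := lc_reg (J := maximalIdeal R) M' hreg' 0
    have hinj : Function.Injective δ := by
      refine (injective_iff_map_eq_zero _).2 fun x hx => ?_
      obtain ⟨y, rfl⟩ := (h2 x).1 hx
      have h3 := lc0_mem y
      rw [gam_quot, Submodule.mem_bot, ← map_zero (lc0 (maximalIdeal R) M')] at h3
      rw [lc0_injective h3, map_zero]
    have h4 : ∀ m : M', ∃ m', r • m' = m := by
      intro m
      obtain ⟨x, hx⟩ := lc0_surj (J := maximalIdeal R) (A := QuotSMulTop (r ^ (k + 1)) M')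
        (htors (((r ^ (k + 1)) • (⊤ : Submodule R M')).mkQ m))
      have h5 : r ^ k • x = 0 := hinj (by
        rw [map_smul, hk' _ (Ideal.pow_mem_pow hrm k), map_zero])
      have h6 : ((r ^ (k + 1)) • (⊤ : Submodule R M')).mkQ (r ^ k • m) = 0 := by
        rw [map_smul, ← hx, ← map_smul, h5, map_zero]
      obtain ⟨m', hm'⟩ := (LinearMap.exact_lsmul_mkQ_smul_top M' (r ^ (k + 1)) _).1 h6
      refine ⟨m', (hreg.pow k) ?_⟩
      change r ^ k • r • m' = r ^ k • m
      rw [smul_smul, ← pow_succ]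
      exact hm'
    have h7 : (⊤ : Submodule R M') ≤ maximalIdeal R • (⊤ : Submodule R M') := by
      intro m _
      obtain ⟨m', rfl⟩ := h4 m
      exact Submodule.smul_mem_smul hrm Submodule.mem_top
    have h8 := Submodule.eq_bot_of_le_smul_of_le_jacobson_bot (maximalIdeal R) (⊤ : Submodule R M')
      Module.Finite.fg_top h7 (IsLocalRing.maximalIdeal_le_jacobson ⊥)
    have : Subsingleton M' := by
      rw [← Submodule.subsingleton_iff R]
      exact subsingleton_of_bot_eq_top h8.symm
    rw [Module.supportDim_eq_bot_of_subsingleton] at hM'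
    cases hM'
  | succ n ih =>
    intro M _ _ _ hM k hk
    let M' := M ⧸ gam (maximalIdeal R) M
    have hM' : Module.supportDim R M' = (n + 1 + 1 : ℕ) := supportDim_gam M _ (by omega) hM
    have hk' : ∀ a ∈ maximalIdeal R ^ k, ∀ x : LC (maximalIdeal R) (n + 1 + 1) M', a • x = 0 := by
      intro a ha x
      obtain ⟨y, rfl⟩ := (lc_gam M (n + 1)).2 x
      rw [← map_smul, hk a ha, map_zero]
    -- with `r` outside the primes of `H^(n+1)(M')`, a power of `𝔪` kills the cokernel of `r` on it
    have := lc_artinian (R := R) (n + 1) M'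
    obtain ⟨P, hPfin, hP, hPr⟩ := exists_primes R (LC (maximalIdeal R) (n + 1) M')
    obtain ⟨r, hrm, hreg, hrP⟩ := exists_reg M' (gam_quot M) P hPfin hP
    obtain ⟨j, hj⟩ := hPr r hrP
    have hd := Module.supportDim_quotSMulTop_succ_eq_supportDim hreg hrm
    rw [hM'] at hd
    have hd0 : Module.supportDim R (QuotSMulTop r M') = (n + 1 : ℕ) := by
      rw [← ENat.WithBot.add_one_cancel, hd]
      norm_cast
    obtain ⟨δ, h1, h2, -⟩ := lc_reg (J := maximalIdeal R) M' hreg (n + 1)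
    refine ih _ hd0 (j + k) fun a ha x => ?_
    rw [pow_add] at ha
    refine Submodule.mul_induction_on ha (fun b hb c hc => ?_) (fun b c hb hc => ?_)
    · have h3 : δ (c • x) = 0 := by rw [map_smul, hk' c hc]
      obtain ⟨y, hy⟩ := (h2 _).1 h3
      obtain ⟨z, hz⟩ := hj b hb y
      rw [mul_smul, ← hy, ← map_smul, ← hz, ← lcMap_smul]
      exact h1.apply_apply_eq_zero z
    · rw [add_smul, hb, hc, add_zero]

end TopLC

/-- Let `(R, 𝔪)` be Noetherian local of dimension `d > 0`.  Then the
top local cohomology module `H^d_𝔪(R)` carries no commutative `R`-algebra structure,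
i.e. there is no `R`-bilinear, commutative, associative multiplication with a unit on
`H^d_𝔪(R)` (for such a structure would make `H^d_𝔪(R) ⊗_R H^d_𝔪(R)` surject onto
`H^d_𝔪(R)`, while `H^d_𝔪(R) ⊗_R H^d_𝔪(R) ≅ H^d_𝔪(H^d_𝔪(R)) = 0`, contradicting
Grothendieck's non-vanishing theorem). -/
theorem stmt_18 (R : Type) [CommRing R] [IsNoetherianRing R] [IsLocalRing R]
    (d : ℕ) (hd : 0 < d) (hdim : ringKrullDim R = d) :
    ¬∃ (mul : ((localCohomology (maximalIdeal R) d).obj (ModuleCat.of R R)) →ₗ[R]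
          ((localCohomology (maximalIdeal R) d).obj (ModuleCat.of R R)) →ₗ[R]
          ((localCohomology (maximalIdeal R) d).obj (ModuleCat.of R R)))
        (one : ((localCohomology (maximalIdeal R) d).obj (ModuleCat.of R R))),
      (∀ x y, mul x y = mul y x) ∧
      (∀ x y z, mul (mul x y) z = mul x (mul y z)) ∧
      (∀ x, mul one x = x) := by
  rintro ⟨mul, one, -, -, h1⟩
  obtain ⟨n, rfl⟩ := Nat.exists_eq_add_of_le' hd
  obtain ⟨t, ht⟩ := TopLC.lc_isTors (J := maximalIdeal R) (A := R) (n + 1) one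
  refine TopLC.lc_top n R ((Module.supportDim_self_eq_ringKrullDim R).trans hdim) t fun a ha x => ?_
  rw [← h1 x, ← LinearMap.smul_apply, ← map_smul, ht a ha, map_zero, LinearMap.zero_apply]
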